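/- arXiv:2312.02596 — 2 statements merged into one kernel-verified Lean document; each statement's English description precedes it below -/
import Mathlib

section
/- Let G be a real m×p matrix, G* a real m×q matrix, Y ∈ ℝ^m, e ∈ ℝ^m the all-ones vector, ε1 ∈ ℝ, and c1, c2, c3 > 0. Suppose v1 ∈ ℝ^p, v1* ∈ ℝ^q, and α ∈ ℝ^m satisfy: (i) c1·v1 − Gᵀ(Y − G v1) − Gᵀα = 0; (ii) c2·v1* + c3·(G*)ᵀe + (G*)ᵀα = 0; (iii) Y − G v1 + ε1 e + G* v1* = 0. If the m×m matrix A = G Gᵀ + (c1/c2)·G*(G*)ᵀ + (1/c2)·G Gᵀ G*(G*)ᵀ is invertible, then α = A⁻¹ ( c1·Y + c1·ε1·e − (c1·c3/c2)·G*(G*)ᵀ e + ε1·G Gᵀ e − (c3/c2)·G Gᵀ G*(G*)ᵀ e ). -/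
open Matrix

/-!
Write `K = G Gᵀ`, `L = G* G*ᵀ` and let `r = Y - G v1` be the residual. Applying `G` to the first
stationarity condition and `G*` to the second eliminates the primal variables:
`c1 r + K (r + α) = c1 Y` and `c2 G* v1* = -L (c3 e + α)`. The constraint expresses `r` through
`G* v1*`, hence through `α`, and substituting it leaves a single linear system for `α`.
-/

section KKT

variable {R m n p : Type*} [Fintype n] [Fintype p]

theorem smul_mulVec_eq_mul_mulVec_of_smul_eq [CommSemiring R] {G : Matrix m p R}
    {B : Matrix p n R} {c : R} {v : p → R} {w : n → R} (h : c • v = B *ᵥ w) :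
    c • (G *ᵥ v) = (G * B) *ᵥ w := by
  rw [← mulVec_smul, h, mulVec_mulVec]

variable [CommRing R]

theorem smul_residual_add_mulVec_eq {G : Matrix n p R} {B : Matrix p n R} {c : R}
    {v : p → R} {Y α : n → R} (h : c • v - B *ᵥ (Y - G *ᵥ v) - B *ᵥ α = 0) :
    c • (Y - G *ᵥ v) + (G * B) *ᵥ (Y - G *ᵥ v + α) = c • Y := by
  have h_v : c • v = B *ᵥ (Y - G *ᵥ v + α) := by
    rwa [sub_sub, ← mulVec_add, sub_eq_zero] at h
  rw [← smul_mulVec_eq_mul_mulVec_of_smul_eq h_v, ← smul_add, sub_add_cancel]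

theorem smul_mulVec_eq_neg_mul_mulVec {G : Matrix m p R} {B : Matrix p n R} {c d : R}
    {v : p → R} {e α : n → R} (h : c • v + d • B *ᵥ e + B *ᵥ α = 0) :
    c • (G *ᵥ v) = -((G * B) *ᵥ (d • e + α)) := by
  have h_v : c • v = B *ᵥ (-(d • e + α)) := by
    rwa [mulVec_neg, mulVec_add, mulVec_smul, ← add_eq_zero_iff_eq_neg, ← add_assoc]
  rw [smul_mulVec_eq_mul_mulVec_of_smul_eq h_v, mulVec_neg]

end KKT

section ClosedForm

variable {F m p q : Type*} [Field F] [Fintype m] [Fintype p] [Fintype q]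

theorem multiplier_mulVec_eq {K L : Matrix m m F} {c1 c2 c3 ε1 : F} (hc2 : c2 ≠ 0)
    {Y e r s α : m → F} (h_residual : c1 • r + K *ᵥ (r + α) = c1 • Y)
    (h_correction : c2 • s = -(L *ᵥ (c3 • e + α))) (h_constraint : r + ε1 • e + s = 0) :
    (K + (c1 / c2) • L + (1 / c2) • (K * L)) *ᵥ α =
      c1 • Y + (c1 * ε1) • e - (c1 * c3 / c2) • L *ᵥ e + ε1 • K *ᵥ e
        - (c3 / c2) • (K * L) *ᵥ e := by
  have r_eq : r = (c3 / c2) • L *ᵥ e + (1 / c2) • L *ᵥ α - ε1 • e := by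
    have s_eq : s = (1 / c2) • -(L *ᵥ (c3 • e + α)) := by
      rw [← h_correction, smul_smul, one_div_mul_cancel hc2, one_smul]
    rw [s_eq, mulVec_add, mulVec_smul] at h_constraint
    linear_combination (norm := module) h_constraint
  have K_r_eq : K *ᵥ r =
      (c3 / c2) • (K * L) *ᵥ e + (1 / c2) • (K * L) *ᵥ α - ε1 • K *ᵥ e := by
    simp only [r_eq, mulVec_sub, mulVec_add, mulVec_smul, mulVec_mulVec]
  rw [mulVec_add, K_r_eq, r_eq] at h_residual
  simp only [add_mulVec, smul_mulVec]
  linear_combination (norm := module) h_residual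

-- Besides `B = Gᵀ`, this covers the complex version `B = Gᴴ`.
theorem lstsvr_pi_alpha_closed_form_general [DecidableEq m]
    {G : Matrix m p F} {B : Matrix p m F} {Gs : Matrix m q F} {Bs : Matrix q m F}
    {Y e : m → F} {ε1 c1 c2 c3 : F} (hc2 : c2 ≠ 0)
    {v1 : p → F} {v1s : q → F} {α : m → F}
    (h1 : c1 • v1 - B *ᵥ (Y - G *ᵥ v1) - B *ᵥ α = 0)
    (h2 : c2 • v1s + c3 • Bs *ᵥ e + Bs *ᵥ α = 0)
    (h3 : Y - G *ᵥ v1 + ε1 • e + Gs *ᵥ v1s = 0)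
    {A : Matrix m m F}
    (hA : A = G * B + (c1 / c2) • (Gs * Bs) + (1 / c2) • (G * B * (Gs * Bs)))
    (hAinv : IsUnit A) :
    α = A⁻¹ *ᵥ (c1 • Y + (c1 * ε1) • e - (c1 * c3 / c2) • (Gs * Bs) *ᵥ e
      + ε1 • (G * B) *ᵥ e - (c3 / c2) • (G * B * (Gs * Bs)) *ᵥ e) := by
  have h_residual := smul_residual_add_mulVec_eq h1
  have h_correction := smul_mulVec_eq_neg_mul_mulVec (G := Gs) h2
  have h_system := multiplier_mulVec_eq hc2 h_residual h_correction h3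
  rw [← hA] at h_system
  have := hAinv.invertible
  exact (inv_mulVec_eq_vec h_system.symm).symm

end ClosedForm

/-- Closed form for the Lagrange multiplier `α` of the first primal problem of
LSTSVR-PI from the KKT conditions. -/
theorem lstsvr_pi_alpha_closed_form {m p q : ℕ}
    (G : Matrix (Fin m) (Fin p) ℝ) (Gs : Matrix (Fin m) (Fin q) ℝ)
    (Y : Fin m → ℝ) (e : Fin m → ℝ) (he : e = fun _ => 1) (ε1 : ℝ)
    (c1 c2 c3 : ℝ) (hc1 : 0 < c1) (hc2 : 0 < c2) (hc3 : 0 < c3)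
    (v1 : Fin p → ℝ) (v1s : Fin q → ℝ) (α : Fin m → ℝ)
    (h1 : c1 • v1 - Gᵀ.mulVec (Y - G.mulVec v1) - Gᵀ.mulVec α = 0)
    (h2 : c2 • v1s + c3 • Gsᵀ.mulVec e + Gsᵀ.mulVec α = 0)
    (h3 : Y - G.mulVec v1 + ε1 • e + Gs.mulVec v1s = 0)
    (A : Matrix (Fin m) (Fin m) ℝ)
    (hA : A = G * Gᵀ + (c1 / c2) • (Gs * Gsᵀ) + (1 / c2) • (G * Gᵀ * (Gs * Gsᵀ)))
    (hAinv : IsUnit A) :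
    α = A⁻¹.mulVec (c1 • Y + (c1 * ε1) • e - (c1 * c3 / c2) • (Gs * Gsᵀ).mulVec e
        + ε1 • (G * Gᵀ).mulVec e - (c3 / c2) • (G * Gᵀ * (Gs * Gsᵀ)).mulVec e) :=
  lstsvr_pi_alpha_closed_form_general hc2.ne' h1 h2 h3 hA hAinv
end

section
/- Let G be a real m×p matrix, G* a real m×q matrix, Y ∈ ℝ^m, e ∈ ℝ^m the all-ones vector, ε2 ∈ ℝ, and c4, c5, c6 > 0. Suppose v2 ∈ ℝ^p, v2* ∈ ℝ^q, and β ∈ ℝ^m satisfy: (i) c4·v2 + Gᵀ(G v2 − Y) + Gᵀβ = 0; (ii) c5·v2* + c6·(G*)ᵀe + (G*)ᵀβ = 0; (iii) G v2 − Y + ε2 e + G* v2* = 0. If the m×m matrix A = G Gᵀ + (c4/c5)·G*(G*)ᵀ + (1/c5)·G Gᵀ G*(G*)ᵀ is invertible, then β = A⁻¹ ( −c4·Y + c4·ε2·e − (c4·c6/c5)·G*(G*)ᵀ e + ε2·G Gᵀ e − (c6/c5)·G Gᵀ G*(G*)ᵀ e ). -/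
open Matrix

/-!
Multiplying the two stationarity conditions by `G` and `Gs` turns them into equations for the
residual `r = G v₂ - Y` and the privileged correction `s = Gs v₂s` alone. The second determines `s`
from `β`, the constraint `r + ε₂ e + s = 0` then determines `r`, and substituting this `r` into the
first leaves a single linear system `A β = b`.
-/

section

variable {m p q : Type*} [Fintype m] [Fintype p]

theorem residual_equation_of_stationary {R : Type*} [CommRing R]
    {G : Matrix m p R} {H : Matrix p m R} {c : R} {v : p → R} {y β : m → R}
    (h : c • v + H *ᵥ (G *ᵥ v - y) + H *ᵥ β = 0) :
    c • (G *ᵥ v - y) + (G * H) *ᵥ (G *ᵥ v - y) + (G * H) *ᵥ β = -(c • y) := by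
  have image_eq_zero : c • G *ᵥ v + (G * H) *ᵥ (G *ᵥ v - y) + (G * H) *ᵥ β = 0 := by
    simpa only [mulVec_add, mulVec_smul, mulVec_mulVec, mulVec_zero] using congrArg (G *ᵥ ·) h
  linear_combination (norm := module) image_eq_zero

variable {K : Type*} [Field K]

theorem mulVec_eq_of_stationary {n : Type*} {G : Matrix n p K} {H : Matrix p m K} {c d : K}
    (hc : c ≠ 0) {w : p → K} {e β : m → K} (h : c • w + d • H *ᵥ e + H *ᵥ β = 0) :
    G *ᵥ w = -((d / c) • (G * H) *ᵥ e + (1 / c) • (G * H) *ᵥ β) := by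
  have w_eq : w = -((d / c) • H *ᵥ e + (1 / c) • H *ᵥ β) := by
    have c_smul_w : c • w = -(d • H *ᵥ e + H *ᵥ β) := by
      linear_combination (norm := module) h
    rw [← inv_smul_smul₀ hc w, c_smul_w]
    module
  simp only [w_eq, mulVec_neg, mulVec_add, mulVec_smul, mulVec_mulVec]

theorem multiplier_equation_of_residual_equation {P Q : Matrix m m K} {a c d ε : K}
    {r s y e β : m → K} (residual : a • r + P *ᵥ r + P *ᵥ β = -(a • y))
    (correction : s = -((d / c) • Q *ᵥ e + (1 / c) • Q *ᵥ β)) (constraint : r + ε • e + s = 0) :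
    (P + (a / c) • Q + (1 / c) • (P * Q)) *ᵥ β =
      (-a) • y + (a * ε) • e - (a * d / c) • Q *ᵥ e + ε • P *ᵥ e - (d / c) • (P * Q) *ᵥ e := by
  have r_eq : r = (d / c) • Q *ᵥ e + (1 / c) • Q *ᵥ β - ε • e := by
    rw [correction] at constraint
    linear_combination (norm := module) constraint
  simp only [r_eq, mulVec_sub, mulVec_add, mulVec_smul, mulVec_mulVec] at residual
  simp only [add_mulVec, smul_mulVec]
  linear_combination (norm := module) residual

theorem lstsvr_pi_beta_closed_form_general [DecidableEq m] [Fintype q]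
    {G : Matrix m p K} {H : Matrix p m K} {Gs : Matrix m q K} {Hs : Matrix q m K}
    {Y e : m → K} {ε2 c4 c5 c6 : K} (hc5 : c5 ≠ 0) {v2 : p → K} {v2s : q → K} {β : m → K}
    (h1 : c4 • v2 + H *ᵥ (G *ᵥ v2 - Y) + H *ᵥ β = 0)
    (h2 : c5 • v2s + c6 • Hs *ᵥ e + Hs *ᵥ β = 0)
    (h3 : G *ᵥ v2 - Y + ε2 • e + Gs *ᵥ v2s = 0)
    {A : Matrix m m K}
    (hA : A = G * H + (c4 / c5) • (Gs * Hs) + (1 / c5) • (G * H * (Gs * Hs)))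
    (hAinv : IsUnit A) :
    β = A⁻¹ *ᵥ ((-c4) • Y + (c4 * ε2) • e - (c4 * c6 / c5) • (Gs * Hs) *ᵥ e
        + ε2 • (G * H) *ᵥ e - (c6 / c5) • (G * H * (Gs * Hs)) *ᵥ e) := by
  obtain ⟨_⟩ := hAinv.nonempty_invertible
  refine (inv_mulVec_eq_vec ?_).symm
  rw [hA]
  exact (multiplier_equation_of_residual_equation (residual_equation_of_stationary h1)
    (mulVec_eq_of_stationary hc5 h2) h3).symm

end

/-- Closed form for the Lagrange multiplier `β` of the second primal problem of
LSTSVR-PI from the KKT conditions. -/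
theorem lstsvr_pi_beta_closed_form {m p q : ℕ}
    (G : Matrix (Fin m) (Fin p) ℝ) (Gs : Matrix (Fin m) (Fin q) ℝ)
    (Y : Fin m → ℝ) (e : Fin m → ℝ) (he : e = fun _ => 1) (ε2 : ℝ)
    (c4 c5 c6 : ℝ) (hc4 : 0 < c4) (hc5 : 0 < c5) (hc6 : 0 < c6)
    (v2 : Fin p → ℝ) (v2s : Fin q → ℝ) (β : Fin m → ℝ)
    (h1 : c4 • v2 + Gᵀ.mulVec (G.mulVec v2 - Y) + Gᵀ.mulVec β = 0)
    (h2 : c5 • v2s + c6 • Gsᵀ.mulVec e + Gsᵀ.mulVec β = 0)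
    (h3 : G.mulVec v2 - Y + ε2 • e + Gs.mulVec v2s = 0)
    (A : Matrix (Fin m) (Fin m) ℝ)
    (hA : A = G * Gᵀ + (c4 / c5) • (Gs * Gsᵀ) + (1 / c5) • (G * Gᵀ * (Gs * Gsᵀ)))
    (hAinv : IsUnit A) :
    β = A⁻¹.mulVec ((-c4) • Y + (c4 * ε2) • e - (c4 * c6 / c5) • (Gs * Gsᵀ).mulVec e
        + ε2 • (G * Gᵀ).mulVec e - (c6 / c5) • (G * Gᵀ * (Gs * Gsᵀ)).mulVec e) :=
  lstsvr_pi_beta_closed_form_general hc5.ne' h1 h2 h3 hA hAinv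
end
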